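/- (Generalized singular value thresholding.) Let m ≤ n and let Z ∈ ℝ^(m×n) admit a singular value decomposition Z = U Σ Vᵀ with U ∈ ℝ^(m×m), V ∈ ℝ^(n×n) orthogonal and Σ ∈ ℝ^(m×n) rectangular diagonal with nonincreasing nonnegative diagonal entries σ_1 ≥ … ≥ σ_m ≥ 0. Let r̂ : [0,∞) → [0,∞) be concave, non-decreasing, with r̂(0) = 0, let μ > 0, and for each i let y_i* ≥ 0 be a global minimizer of y ↦ ½(y − σ_i)² + μ r̂(y) over y ≥ 0, chosen so that y_1* ≥ y_2* ≥ … ≥ y_m*. Define X̂ = U D Vᵀ, where D ∈ ℝ^(m×n) has D_{ii} = y_i* and zeros off the diagonal. Then X̂ is a global minimizer over ℝ^(m×n) of the function X ↦ ½‖X − Z‖_F² + μ ∑_{i=1}^m r̂(σ_i(X)), where σ_1(X), …, σ_m(X) denote the singular values of X. -/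

import Mathlib

/-! Orthogonal invariance of the Frobenius norm turns the claim into one about `M = Uᵀ X V` and the
diagonal matrix `S`. Write `M = A * C` with `A` orthogonal and `C Cᵀ = diag(τ²)`, where `τ` is the
family of singular values of `X`. Then `M i i = ∑ k, A i k * C k i ≤ ∑ k, W i k * τ k`, where
`W i k = (A i k ^ 2 + (C k i / τ k) ^ 2) / 2` is doubly substochastic: after division by `τ k` the
rows of `C` are orthonormal or zero, so Bessel's inequality bounds their coordinates.

With `g k = τ k ^ 2 / 2 + μ r (τ k) ≥ 0` and `φ i ≤ 0` the optimal value of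
`y ↦ y ^ 2 / 2 - s i * y + μ r y`, the scalar minimality gives `φ i ≤ g k - s i * τ k` for *every*
pair `(i, k)`. Averaging against `W` yields
`∑ φ i ≤ ∑ W i k * φ i ≤ ∑ W i k * (g k - s i * τ k) ≤ ∑ g k - ∑ W i k * s i * τ k`,
which is the required lower bound. This averaging (`sum_le_of_substochastic`) takes the place of
von Neumann's trace inequality, and no ordering of the singular values is needed. On the other
side, the singular values of `U D Vᵀ` are the `ystar i` up to a permutation, by comparing
characteristic polynomials, so that `U D Vᵀ` attains the bound. -/


open Matrix

/-- Squared Frobenius norm of a real matrix. -/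
def frobSq {a b : ℕ} (A : Matrix (Fin a) (Fin b) ℝ) : ℝ :=
  ∑ i, ∑ j, (A i j) ^ 2

/-- `X Xᵀ` is Hermitian for a real matrix `X`. -/
theorem isHermitian_mul_t {a b : ℕ} (X : Matrix (Fin a) (Fin b) ℝ) :
    (X * Xᵀ).IsHermitian :=
  Matrix.conjTranspose_eq_transpose_of_trivial X ▸ Matrix.isHermitian_mul_conjTranspose_self X

/-- Singular values of a real `a × b` matrix: square roots of the eigenvalues of `X Xᵀ`. -/
noncomputable def svals {a b : ℕ} (X : Matrix (Fin a) (Fin b) ℝ) : Fin a → ℝ :=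
  fun i => Real.sqrt ((isHermitian_mul_t X).eigenvalues i)

theorem frobSq_eq_trace {a b : ℕ} (A : Matrix (Fin a) (Fin b) ℝ) :
    frobSq A = (A * Aᵀ).trace := by
  simp [frobSq, Matrix.trace, Matrix.mul_apply, sq]

theorem frobSq_orthogonal {m n : ℕ} (U : Matrix (Fin m) (Fin m) ℝ) (hU : Uᵀ * U = 1)
    (V : Matrix (Fin n) (Fin n) ℝ) (hV : Vᵀ * V = 1) (A : Matrix (Fin m) (Fin n) ℝ) :
    frobSq (U * A * Vᵀ) = frobSq A := by
  rw [frobSq_eq_trace, frobSq_eq_trace]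
  have h : (U * A * Vᵀ) * (U * A * Vᵀ)ᵀ = U * (A * Aᵀ) * Uᵀ := by
    simp only [Matrix.transpose_mul, Matrix.transpose_transpose]
    calc _ = U * A * (Vᵀ * V) * (Aᵀ * Uᵀ) := by simp only [Matrix.mul_assoc]
      _ = _ := by rw [hV]; simp only [Matrix.mul_assoc, Matrix.mul_one]
  rw [h, Matrix.trace_mul_comm, ← Matrix.mul_assoc, hU, Matrix.one_mul]

theorem sq_svals {m n : ℕ} (X : Matrix (Fin m) (Fin n) ℝ) (i : Fin m) :
    svals X i ^ 2 = (isHermitian_mul_t X).eigenvalues i := by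
  have h : (X * Xᵀ).PosSemidef := by
    simpa using Matrix.posSemidef_self_mul_conjTranspose X
  exact Real.sq_sqrt (h.eigenvalues_nonneg i)

theorem frobSq_eq_sum_sq_svals {m n : ℕ} (X : Matrix (Fin m) (Fin n) ℝ) :
    frobSq X = ∑ i, svals X i ^ 2 := by
  rw [frobSq_eq_trace, (isHermitian_mul_t X).trace_eq_sum_eigenvalues]
  simp [sq_svals]

/-- A singular value decomposition in which the right factor is left unnormalised, so that zero
singular values need no completion to an orthonormal basis. -/
theorem exists_orthogonal_factor {m n : ℕ} (X : Matrix (Fin m) (Fin n) ℝ) :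
    ∃ (P : Matrix (Fin m) (Fin m) ℝ) (C : Matrix (Fin m) (Fin n) ℝ),
      Pᵀ * P = 1 ∧ X = P * C ∧ C * Cᵀ = Matrix.diagonal (fun k => svals X k ^ 2) := by
  set P : Matrix (Fin m) (Fin m) ℝ :=
    ((isHermitian_mul_t X).eigenvectorUnitary).1 with hPdef
  have hP : Pᵀ * P = 1 := by
    have := Unitary.coe_star_mul_self (isHermitian_mul_t X).eigenvectorUnitary
    simpa [Matrix.star_eq_conjTranspose] using this
  have hP' : P * Pᵀ = 1 := mul_eq_one_comm.mp hP
  have hs : X * Xᵀ = P * Matrix.diagonal (fun k => svals X k ^ 2) * Pᵀ := by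
    have := (isHermitian_mul_t X).spectral_theorem
    rw [Unitary.conjStarAlgAut_apply] at this
    simpa [Matrix.star_eq_conjTranspose, sq_svals, Function.comp_def] using this
  refine ⟨P, Pᵀ * X, hP, by rw [← Matrix.mul_assoc, hP', Matrix.one_mul], ?_⟩
  rw [Matrix.transpose_mul, Matrix.transpose_transpose]
  calc Pᵀ * X * (Xᵀ * P) = Pᵀ * (X * Xᵀ) * P := by simp only [Matrix.mul_assoc]
    _ = (Pᵀ * P) * Matrix.diagonal (fun k => svals X k ^ 2) * (Pᵀ * P) := by
      rw [hs]; simp only [Matrix.mul_assoc]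
    _ = _ := by rw [hP, Matrix.one_mul, Matrix.mul_one]

/-- Bessel's inequality for a coordinate vector. The hypothesis says that `Q` is a partial isometry
(for instance, that its nonzero rows are orthonormal); then `Qᵀ * Q` is an orthogonal projection,
whose diagonal entries are at most `1`. -/
theorem sum_sq_col_le_one {m n : ℕ} (Q : Matrix (Fin m) (Fin n) ℝ)
    (hQ : Q * Qᵀ * Q = Q) (j : Fin n) : ∑ k, Q k j ^ 2 ≤ 1 := by
  have hG : (Qᵀ * Q) * (Qᵀ * Q) = Qᵀ * Q := by
    calc _ = Qᵀ * (Q * Qᵀ * Q) := by simp only [Matrix.mul_assoc]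
      _ = _ := by rw [hQ]
  have hd : (Qᵀ * Q) j j = ∑ k, Q k j ^ 2 := by simp [Matrix.mul_apply, sq]
  have hsym : ∀ l, (Qᵀ * Q) l j = (Qᵀ * Q) j l := fun l => by
    simp [Matrix.mul_apply, mul_comm]
  have h1 : (Qᵀ * Q) j j = ∑ l, (Qᵀ * Q) j l ^ 2 := by
    conv_lhs => rw [← hG]
    rw [Matrix.mul_apply]
    exact Finset.sum_congr rfl fun l _ => by rw [hsym, sq]
  have h2 : (Qᵀ * Q) j j ^ 2 ≤ ∑ l, (Qᵀ * Q) j l ^ 2 :=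
    Finset.single_le_sum (f := fun l => (Qᵀ * Q) j l ^ 2) (fun l _ => sq_nonneg _)
      (Finset.mem_univ j)
  rw [← hd]
  nlinarith

/-- The averaging step: `φ i ≤ g k - s i * τ k` for all pairs `(i, k)` is weighted by a doubly
substochastic `W`; the missing mass only helps because `g ≥ 0 ≥ φ`. -/
theorem sum_le_of_substochastic {m : ℕ} (W : Fin m → Fin m → ℝ) (hW : ∀ i k, 0 ≤ W i k)
    (hrow : ∀ i, ∑ k, W i k ≤ 1) (hcol : ∀ k, ∑ i, W i k ≤ 1)
    (g φ s τ : Fin m → ℝ) (hg : ∀ k, 0 ≤ g k) (hφ : ∀ i, φ i ≤ 0)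
    (h : ∀ i k, φ i ≤ g k - s i * τ k) :
    ∑ i, φ i ≤ ∑ k, g k - ∑ i, ∑ k, s i * (W i k * τ k) := by
  have h1 : ∑ i, φ i ≤ ∑ i, ∑ k, W i k * φ i := by
    refine Finset.sum_le_sum fun i _ => ?_
    rw [← Finset.sum_mul]
    nlinarith [hrow i, hφ i]
  have h2 : ∑ i, ∑ k, W i k * φ i ≤ ∑ i, ∑ k, W i k * (g k - s i * τ k) :=
    Finset.sum_le_sum fun i _ => Finset.sum_le_sum fun k _ =>
      mul_le_mul_of_nonneg_left (h i k) (hW i k)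
  have h3 : ∑ i, ∑ k, W i k * g k ≤ ∑ k, g k := by
    rw [Finset.sum_comm]
    refine Finset.sum_le_sum fun k _ => ?_
    rw [← Finset.sum_mul]
    nlinarith [hcol k, hg k]
  have h4 : ∑ i, ∑ k, W i k * (g k - s i * τ k)
      = ∑ i, ∑ k, W i k * g k - ∑ i, ∑ k, s i * (W i k * τ k) := by
    simp only [← Finset.sum_sub_distrib]
    exact Finset.sum_congr rfl fun i _ => Finset.sum_congr rfl fun k _ => by ring
  linarith

/-- The diagonal of `A * C`, with `A` orthogonal and `C * Cᵀ = diag(τ²)`, is dominated by a doubly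
substochastic average of `τ`. -/
theorem exists_substochastic {m n : ℕ} (hmn : m ≤ n) (A : Matrix (Fin m) (Fin m) ℝ)
    (hA : Aᵀ * A = 1) (C : Matrix (Fin m) (Fin n) ℝ) (τ : Fin m → ℝ) (hτ : ∀ k, 0 ≤ τ k)
    (hC : C * Cᵀ = Matrix.diagonal (fun k => τ k ^ 2)) :
    ∃ W : Fin m → Fin m → ℝ, (∀ i k, 0 ≤ W i k) ∧ (∀ i, ∑ k, W i k ≤ 1) ∧
      (∀ k, ∑ i, W i k ≤ 1) ∧
      ∀ i, (A * C) i (Fin.castLE hmn i) ≤ ∑ k, W i k * τ k := by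
  have hCC : ∀ k l, ∑ j, C k j * C l j = if k = l then τ k ^ 2 else 0 := fun k l => by
    have := congrFun (congrFun hC k) l
    simpa [Matrix.mul_apply, Matrix.diagonal_apply] using this
  have hC0 : ∀ k, τ k = 0 → ∀ j, C k j = 0 := fun k hk j => by
    have h := hCC k k
    simp only [if_true, hk] at h
    have h' : ∑ j, C k j * C k j = 0 := by simpa using h
    have := (Finset.sum_eq_zero_iff_of_nonneg (fun j _ => mul_self_nonneg (C k j))).1 h' j
      (Finset.mem_univ j)
    exact mul_self_eq_zero.1 this
  -- Where `τ k = 0` the division returns the zero row, which agrees with `C k = 0`.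
  let Q : Matrix (Fin m) (Fin n) ℝ := Matrix.of fun k j => C k j / τ k
  have hQC : ∀ k j, C k j = τ k * Q k j := fun k j => by
    by_cases hk : τ k = 0
    · simp [hk, hC0 k hk j]
    · simp only [Q, Matrix.of_apply]; field_simp
  have hQQ : Q * Qᵀ = Matrix.diagonal (fun k => if τ k = 0 then 0 else 1) := by
    ext k l
    have h : (Q * Qᵀ) k l = (∑ j, C k j * C l j) / (τ k * τ l) := by
      rw [Matrix.mul_apply, Finset.sum_div]
      exact Finset.sum_congr rfl fun j _ => by
        simp only [Q, Matrix.of_apply, Matrix.transpose_apply]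
        rw [div_mul_div_comm]
    rw [h, hCC, Matrix.diagonal_apply]
    by_cases hkl : k = l
    · subst hkl
      by_cases hk : τ k = 0
      · simp [hk]
      · simp only [if_true, hk, if_false]; field_simp
    · simp [hkl]
  have hQp : Q * Qᵀ * Q = Q := by
    rw [hQQ]
    ext k j
    rw [Matrix.diagonal_mul]
    by_cases hk : τ k = 0
    · simp [Q, hk]
    · simp [hk]
  have hA' : A * Aᵀ = 1 := mul_eq_one_comm.mp hA
  have hArow : ∀ i, ∑ k, A i k ^ 2 = 1 := fun i => by
    have := congrFun (congrFun hA' i) i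
    simpa [Matrix.mul_apply, sq] using this
  have hAcol : ∀ k, ∑ i, A i k ^ 2 = 1 := fun k => by
    have := congrFun (congrFun hA k) k
    simpa [Matrix.mul_apply, sq] using this
  have hQrow : ∀ k, ∑ i, Q k (Fin.castLE hmn i) ^ 2 ≤ 1 := fun k => by
    have h1 : ∑ i, Q k (Fin.castLE hmn i) ^ 2 ≤ ∑ j, Q k j ^ 2 := by
      have h := Finset.sum_map Finset.univ (Fin.castLEEmb hmn) (fun j => Q k j ^ 2)
      simp only [Fin.castLEEmb_apply] at h
      rw [← h]
      exact Finset.sum_le_sum_of_subset_of_nonneg (Finset.subset_univ _)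
        fun _ _ _ => sq_nonneg _
    have h2 := congrFun (congrFun hQQ k) k
    rw [Matrix.mul_apply, Matrix.diagonal_apply_eq] at h2
    simp only [Matrix.transpose_apply, ← sq] at h2
    have h3 : (if τ k = 0 then (0 : ℝ) else 1) ≤ 1 := by split_ifs <;> norm_num
    linarith
  refine ⟨fun i k => (A i k ^ 2 + Q k (Fin.castLE hmn i) ^ 2) / 2, fun i k => by positivity,
    fun i => ?_, fun k => ?_, fun i => ?_⟩
  · rw [← Finset.sum_div, Finset.sum_add_distrib, hArow]
    linarith [sum_sq_col_le_one Q hQp (Fin.castLE hmn i)]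
  · rw [← Finset.sum_div, Finset.sum_add_distrib, hAcol]
    linarith [hQrow k]
  · rw [Matrix.mul_apply]
    refine Finset.sum_le_sum fun k _ => ?_
    rw [hQC]
    nlinarith [mul_nonneg (hτ k) (sq_nonneg (A i k - Q k (Fin.castLE hmn i)))]

/-- `X * Xᵀ` and `diag(y²)` have the same characteristic polynomial, so the singular values of `X`
are the `y i` up to a permutation. -/
theorem sum_svals_eq {m n : ℕ} (X : Matrix (Fin m) (Fin n) ℝ) (U : Matrix (Fin m) (Fin m) ℝ)
    (hU : Uᵀ * U = 1) (y : Fin m → ℝ) (hy : ∀ i, 0 ≤ y i)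
    (hX : X * Xᵀ = U * Matrix.diagonal (fun i => y i ^ 2) * Uᵀ) (r : ℝ → ℝ) :
    ∑ i, r (svals X i) = ∑ i, r (y i) := by
  have hc : (X * Xᵀ).charpoly = (Matrix.diagonal (fun i => y i ^ 2)).charpoly := by
    rw [hX, Matrix.charpoly_mul_comm, ← Matrix.mul_assoc, hU, Matrix.one_mul]
  have h1 := (isHermitian_mul_t X).roots_charpoly_eq_eigenvalues
  rw [hc, Matrix.charpoly_diagonal] at h1
  have hroots : (∏ i, (Polynomial.X - Polynomial.C (y i ^ 2))).roots
      = Multiset.map (fun i => y i ^ 2) Finset.univ.val := by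
    have := Polynomial.roots_multiset_prod_X_sub_C
      (Multiset.map (fun i => y i ^ 2) Finset.univ.val)
    rwa [Multiset.map_map] at this
  rw [hroots] at h1
  have h2 : Multiset.map (fun i => y i ^ 2) Finset.univ.val
      = Multiset.map (isHermitian_mul_t X).eigenvalues Finset.univ.val := by
    simpa [Function.comp_def] using h1
  have h3 := congrArg (fun t => (Multiset.map (fun x => r (Real.sqrt x)) t).sum) h2
  simp only [Multiset.map_map, Function.comp_def, Real.sqrt_sq (hy _)] at h3
  exact h3.symm

/-- The entries of a rectangular diagonal matrix enter a sum only through the diagonal. -/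
theorem sum_rect_diag {m n : ℕ} (hmn : m ≤ n) (f : Fin m → Fin n → ℝ)
    (hf : ∀ (i : Fin m) (j : Fin n), (i : ℕ) ≠ (j : ℕ) → f i j = 0) :
    ∑ i, ∑ j, f i j = ∑ i, f i (Fin.castLE hmn i) :=
  Finset.sum_congr rfl fun i _ => Finset.sum_eq_single _
    (fun j _ hj => hf i j fun h => hj (Fin.ext (by simp [h])))
    (fun h => absurd (Finset.mem_univ _) h)

/-- Generalized singular value thresholding: if `Z = U Σ Vᵀ` is an SVD with nonincreasing
nonnegative singular values `σ`, `r̂` is a concave non-decreasing penalty with `r̂(0) = 0`,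
and each `y_i* ≥ 0` globally minimizes `y ↦ ½(y - σ_i)² + μ r̂(y)` over `y ≥ 0`, with
`y_1* ≥ … ≥ y_m*`, then `X̂ = U D Vᵀ` with `D_{ii} = y_i*` globally minimizes
`X ↦ ½‖X - Z‖_F² + μ ∑ᵢ r̂(σ_i(X))`. -/
theorem gsvt_minimizes {m n : ℕ} (hmn : m ≤ n)
    (Z : Matrix (Fin m) (Fin n) ℝ)
    (U : Matrix (Fin m) (Fin m) ℝ) (hU : Uᵀ * U = 1)
    (V : Matrix (Fin n) (Fin n) ℝ) (hV : Vᵀ * V = 1)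
    (S : Matrix (Fin m) (Fin n) ℝ)
    (hSdiag : ∀ (i : Fin m) (j : Fin n), (i : ℕ) ≠ (j : ℕ) → S i j = 0)
    (hSnonneg : ∀ i : Fin m, 0 ≤ S i (Fin.castLE hmn i))
    (hSmono : ∀ i j : Fin m, i ≤ j → S j (Fin.castLE hmn j) ≤ S i (Fin.castLE hmn i))
    (hZ : Z = U * S * Vᵀ)
    (r : ℝ → ℝ)
    (hconc : ConcaveOn ℝ (Set.Ici (0 : ℝ)) r)
    (hmono : MonotoneOn r (Set.Ici (0 : ℝ)))
    (hr0 : r 0 = 0)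
    (hrnonneg : ∀ y : ℝ, 0 ≤ y → 0 ≤ r y)
    (μ : ℝ) (hμ : 0 < μ)
    (ystar : Fin m → ℝ)
    (hynonneg : ∀ i, 0 ≤ ystar i)
    (hymin : ∀ i : Fin m, ∀ y : ℝ, 0 ≤ y →
      (1 / 2) * (ystar i - S i (Fin.castLE hmn i)) ^ 2 + μ * r (ystar i)
        ≤ (1 / 2) * (y - S i (Fin.castLE hmn i)) ^ 2 + μ * r y)
    (hymono : ∀ i j : Fin m, i ≤ j → ystar j ≤ ystar i)
    (D : Matrix (Fin m) (Fin n) ℝ)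
    (hD : ∀ (i : Fin m) (j : Fin n),
      D i j = if (i : ℕ) = (j : ℕ) then ystar i else 0) :
    ∀ X : Matrix (Fin m) (Fin n) ℝ,
      (1 / 2) * frobSq (U * D * Vᵀ - Z) + μ * ∑ i, r (svals (U * D * Vᵀ) i)
        ≤ (1 / 2) * frobSq (X - Z) + μ * ∑ i, r (svals X i) := by
  intro X
  set s : Fin m → ℝ := fun i => S i (Fin.castLE hmn i) with hs
  have hU' : U * Uᵀ = 1 := mul_eq_one_comm.mp hU
  have hV' : V * Vᵀ = 1 := mul_eq_one_comm.mp hV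
  have hDdiag : ∀ i, D i (Fin.castLE hmn i) = ystar i := fun i => by simp [hD]
  have hDoff : ∀ (i : Fin m) (j : Fin n), (i : ℕ) ≠ (j : ℕ) → D i j = 0 := fun i j h => by
    simp [hD, h]
  have hleft : frobSq (U * D * Vᵀ - Z) = ∑ i, (ystar i - s i) ^ 2 := by
    rw [hZ, ← Matrix.sub_mul, ← Matrix.mul_sub, frobSq_orthogonal U hU V hV, frobSq,
      sum_rect_diag hmn _ fun i j h => by simp [hDoff i j h, hSdiag i j h]]
    simp [hDdiag, hs]
  have hDD : D * Dᵀ = Matrix.diagonal (fun i => ystar i ^ 2) := by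
    ext i k
    rw [Matrix.mul_apply, Finset.sum_eq_single (Fin.castLE hmn i)
      (fun j _ hj => by rw [hDoff i j fun h => hj (Fin.ext (by simp [h])), zero_mul])
      (fun h => absurd (Finset.mem_univ _) h), hDdiag, Matrix.transpose_apply,
      Matrix.diagonal_apply]
    by_cases hik : i = k
    · subst hik
      rw [hDdiag, if_pos rfl, sq]
    · rw [hDoff k _ fun h => hik (Fin.ext (by simpa using h.symm)), if_neg hik, mul_zero]
  have hsv : ∑ i, r (svals (U * D * Vᵀ) i) = ∑ i, r (ystar i) := by
    refine sum_svals_eq _ U hU ystar hynonneg ?_ r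
    rw [← hDD]
    simp only [Matrix.transpose_mul, Matrix.transpose_transpose]
    calc _ = U * D * (Vᵀ * V) * (Dᵀ * Uᵀ) := by simp only [Matrix.mul_assoc]
      _ = _ := by rw [hV]; simp only [Matrix.mul_assoc, Matrix.mul_one]
  obtain ⟨P, C, hP, hXPC, hCC⟩ := exists_orthogonal_factor X
  have hP' : P * Pᵀ = 1 := mul_eq_one_comm.mp hP
  have hA : (Uᵀ * P)ᵀ * (Uᵀ * P) = 1 := by
    simp only [Matrix.transpose_mul, Matrix.transpose_transpose]
    calc _ = Pᵀ * (U * Uᵀ) * P := by simp only [Matrix.mul_assoc]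
      _ = 1 := by rw [hU', Matrix.mul_one, hP]
  have hCV : (C * V) * (C * V)ᵀ = Matrix.diagonal (fun k => svals X k ^ 2) := by
    rw [← hCC, Matrix.transpose_mul]
    calc _ = C * (V * Vᵀ) * Cᵀ := by simp only [Matrix.mul_assoc]
      _ = _ := by rw [hV', Matrix.mul_one]
  have hτ : ∀ k, 0 ≤ svals X k := fun k => Real.sqrt_nonneg _
  obtain ⟨W, hW, hrow, hcol, hdiag⟩ :=
    exists_substochastic hmn (Uᵀ * P) hA (C * V) (svals X) hτ hCV
  set M : Matrix (Fin m) (Fin n) ℝ := (Uᵀ * P) * (C * V) with hM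
  have hXM : X = U * M * Vᵀ := by
    calc X = (U * Uᵀ) * (P * C) * (V * Vᵀ) := by
          rw [hU', hV', Matrix.one_mul, Matrix.mul_one, ← hXPC]
      _ = _ := by simp only [hM, Matrix.mul_assoc]
  have hMsq : ∑ i, ∑ j, M i j ^ 2 = ∑ k, svals X k ^ 2 := by
    rw [← frobSq_eq_sum_sq_svals, hXM, frobSq_orthogonal U hU V hV, frobSq]
  have hright : frobSq (X - Z) = ∑ k, svals X k ^ 2
      - 2 * ∑ i, s i * M i (Fin.castLE hmn i) + ∑ i, s i ^ 2 := by
    have hXZ : X - Z = U * (M - S) * Vᵀ := by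
      rw [hZ, Matrix.mul_sub, Matrix.sub_mul, ← hXM]
    have hMS := sum_rect_diag hmn (fun i j => S i j * M i j) fun i j h => by
      simp [hSdiag i j h]
    have hSS := sum_rect_diag hmn (fun i j => S i j ^ 2) fun i j h => by
      simp [hSdiag i j h]
    rw [hXZ, frobSq_orthogonal U hU V hV, ← hMsq, ← hMS, ← hSS]
    simp only [frobSq, Finset.mul_sum, ← Finset.sum_sub_distrib, ← Finset.sum_add_distrib,
      Matrix.sub_apply]
    exact Finset.sum_congr rfl fun i _ => Finset.sum_congr rfl fun j _ => by ring
  have hkey := sum_le_of_substochastic W hW hrow hcol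
    (fun k => 1 / 2 * svals X k ^ 2 + μ * r (svals X k))
    (fun i => 1 / 2 * ystar i ^ 2 - s i * ystar i + μ * r (ystar i)) s (svals X)
    (fun k => by have := hrnonneg _ (hτ k); positivity)
    (fun i => by
      -- Comparison with the competitor `y = 0`.
      have := hymin i 0 le_rfl
      rw [hr0] at this
      simp only [hs]
      nlinarith)
    (fun i k => by
      have := hymin i _ (hτ k)
      simp only [hs]
      nlinarith)
  have htr : ∑ i, s i * M i (Fin.castLE hmn i) ≤ ∑ i, ∑ k, s i * (W i k * svals X k) := by
    refine Finset.sum_le_sum fun i _ => ?_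
    rw [← Finset.mul_sum]
    exact mul_le_mul_of_nonneg_left (hdiag i) (hSnonneg i)
  have hexp : ∑ i, (ystar i - s i) ^ 2
      = ∑ i, ystar i ^ 2 - 2 * ∑ i, s i * ystar i + ∑ i, s i ^ 2 := by
    rw [Finset.mul_sum, ← Finset.sum_sub_distrib, ← Finset.sum_add_distrib]
    exact Finset.sum_congr rfl fun i _ => by ring
  simp only [Finset.sum_add_distrib, Finset.sum_sub_distrib, ← Finset.mul_sum] at hkey
  simp only [← Finset.mul_sum] at htr
  rw [hleft, hsv, hright, hexp]
  linarith
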